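/- Suppose s₀ > 0 satisfies the free boundary condition tanh(φ(s₀)) = B(s₀)·K/(a·sinh(2s₀)), and let r := arcosh(A(s₀)·cosh(φ(s₀))). Then the field f_*(s) := d/ds (A(s)·cosh(φ(s))) satisfies f_*(s₀) = sinh(r) and the Robin boundary condition f_*'(s₀) = coth(r)·f_*(s₀). -/

import Mathlib

/-!
The curve `s ↦ (A cosh φ, A sinh φ, B)` is the unit-speed profile of a minimal surface of revolution
with metric `ds² + B² dθ²` in the hyperboloid model of hyperbolic space. Coordinate functions `x` on
such a surface satisfy `Δx = 2x`, so `x = A cosh φ` solves `x'' + (B'/B) x' = 2x`. The free boundary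
condition at `s₀` says that `(y, B)' ∥ (y, B)` for `y = A sinh φ`, and forces `(B'/B) x' = x` and
`x'² = x² - 1` there. As `x(s₀) = cosh r`, this gives `x' = sinh r` and `x'' = 2x - x = cosh r`.
-/

namespace MoriCatenoid

/-- Profile function `B(s) = √(a·cosh(2s) − 1/2)` of the Mori family. -/
noncomputable def B (a s : ℝ) : ℝ := Real.sqrt (a * Real.cosh (2 * s) - 1 / 2)

/-- Profile function `A(s) = √(a·cosh(2s) + 1/2)` of the Mori family. -/
noncomputable def A (a s : ℝ) : ℝ := Real.sqrt (a * Real.cosh (2 * s) + 1 / 2)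

/-- The constant `K = √(a² − 1/4)`. -/
noncomputable def K (a : ℝ) : ℝ := Real.sqrt (a ^ 2 - 1 / 4)

/-- The angle function `φ(s) = K·∫₀ˢ dt/(A(t)²·B(t))`. -/
noncomputable def φ (a s : ℝ) : ℝ := K a * ∫ t in (0:ℝ)..s, 1 / ((A a t) ^ 2 * B a t)

/-- The mode-one Jacobi field `f_*(s) = d/ds (A(s)·cosh(φ(s)))`. -/
noncomputable def fstar (a s : ℝ) : ℝ := deriv (fun t => A a t * Real.cosh (φ a t)) s

/-- Squared norm of the second fundamental form, `|II|²(s) = 2·(B''(s)/B(s) − 1)`. -/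
noncomputable def IIsq (a s : ℝ) : ℝ := 2 * (deriv (deriv (B a)) s / B a s - 1)

/-- The mode-`k` potential `W_k(s) = |II|²(s) − 2 − k²/B(s)²`. -/
noncomputable def W (a : ℝ) (k : ℤ) (s : ℝ) : ℝ := IIsq a s - 2 - (k : ℝ) ^ 2 / (B a s) ^ 2

/-- Inverse hyperbolic cosine: `arcosh x = log (x + √(x² − 1))`. -/
noncomputable def arcosh (x : ℝ) : ℝ := Real.log (x + Real.sqrt (x ^ 2 - 1))

/-- The axial boost field `u_*(s) = −a·sinh(2s)/B(s)`. -/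
noncomputable def ustar (a s : ℝ) : ℝ := -a * Real.sinh (2 * s) / B a s

/-- The radial quadratic form of mode `k`:
`S_k(u) = ∫_{−s₀}^{s₀} (B·u'² − B·W_k·u²) − coth(r)·B(s₀)·(u(s₀)² + u(−s₀)²)`,
where `u'` is the derivative of `u` within `[−s₀, s₀]`. -/
noncomputable def Sk (a s₀ r : ℝ) (k : ℤ) (u : ℝ → ℝ) : ℝ :=
  (∫ s in (-s₀)..s₀,
      (B a s * (derivWithin u (Set.Icc (-s₀) s₀) s) ^ 2 - B a s * W a k s * u s ^ 2))
    - Real.cosh r / Real.sinh r * B a s₀ * (u s₀ ^ 2 + u (-s₀) ^ 2)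

section Profile

variable {a : ℝ}

theorem hasDerivAt_sqrt_mul_cosh_two_mul_add {b s : ℝ} (h : 0 < a * Real.cosh (2 * s) + b) :
    HasDerivAt (fun t ↦ √(a * Real.cosh (2 * t) + b))
      (a * Real.sinh (2 * s) / √(a * Real.cosh (2 * s) + b)) s := by
  have hcosh := (((hasDerivAt_id s).const_mul 2).cosh.const_mul a).add_const b
  refine (hcosh.sqrt h.ne').congr_deriv ?_
  simp only [id, mul_one]
  rw [← mul_assoc, mul_comm _ 2, mul_div_mul_left _ _ two_ne_zero]

theorem half_lt_mul_cosh (ha : 1 / 2 < a) (x : ℝ) : 1 / 2 < a * Real.cosh x :=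
  ha.trans_le (le_mul_of_one_le_right (by linarith) (Real.one_le_cosh x))

theorem A_pos (ha : 1 / 2 < a) (s : ℝ) : 0 < A a s :=
  Real.sqrt_pos.2 (by linarith [half_lt_mul_cosh ha (2 * s)])

theorem B_pos (ha : 1 / 2 < a) (s : ℝ) : 0 < B a s :=
  Real.sqrt_pos.2 (by linarith [half_lt_mul_cosh ha (2 * s)])

theorem B_sq (ha : 1 / 2 < a) (s : ℝ) : B a s ^ 2 = a * Real.cosh (2 * s) - 1 / 2 :=
  Real.sq_sqrt (by linarith [half_lt_mul_cosh ha (2 * s)])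

theorem A_sq (ha : 1 / 2 < a) (s : ℝ) : A a s ^ 2 = B a s ^ 2 + 1 := by
  rw [B_sq ha, A, Real.sq_sqrt (by linarith [half_lt_mul_cosh ha (2 * s)])]
  ring

theorem one_le_A (ha : 1 / 2 < a) (s : ℝ) : 1 ≤ A a s :=
  Real.one_le_sqrt.2 (by linarith [half_lt_mul_cosh ha (2 * s)])

theorem K_pos (ha : 1 / 2 < a) : 0 < K a :=
  Real.sqrt_pos.2 (by nlinarith)

theorem K_sq_add_sq (ha : 1 / 2 < a) (s : ℝ) :
    K a ^ 2 + (a * Real.sinh (2 * s)) ^ 2 = A a s ^ 2 * B a s ^ 2 := by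
  rw [K, Real.sq_sqrt (by nlinarith), A_sq ha, B_sq ha, mul_pow, Real.sinh_sq]
  ring

theorem hasDerivAt_A (ha : 1 / 2 < a) (s : ℝ) :
    HasDerivAt (A a) (a * Real.sinh (2 * s) / A a s) s :=
  hasDerivAt_sqrt_mul_cosh_two_mul_add (by linarith [half_lt_mul_cosh ha (2 * s)])

theorem hasDerivAt_B (ha : 1 / 2 < a) (s : ℝ) :
    HasDerivAt (B a) (a * Real.sinh (2 * s) / B a s) s :=
  hasDerivAt_sqrt_mul_cosh_two_mul_add (b := -(1 / 2)) (by linarith [half_lt_mul_cosh ha (2 * s)])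

theorem hasDerivAt_φ (ha : 1 / 2 < a) (s : ℝ) :
    HasDerivAt (φ a) (K a / (A a s ^ 2 * B a s)) s := by
  have hA : Continuous (A a) :=
    continuous_iff_continuousAt.2 fun t ↦ (hasDerivAt_A ha t).continuousAt
  have hB : Continuous (B a) :=
    continuous_iff_continuousAt.2 fun t ↦ (hasDerivAt_B ha t).continuousAt
  have hcont : Continuous fun t ↦ 1 / (A a t ^ 2 * B a t) :=
    continuous_const.div ((hA.pow 2).mul hB) fun t ↦
      (mul_pos (pow_pos (A_pos ha t) 2) (B_pos ha t)).ne'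
  rw [← mul_one_div]
  exact (hcont.integral_hasStrictDerivAt 0 s).hasDerivAt.const_mul (K a)

theorem A_mul_fstar (ha : 1 / 2 < a) (s : ℝ) :
    A a s * fstar a s =
      a * Real.sinh (2 * s) * Real.cosh (φ a s) + K a * Real.sinh (φ a s) / B a s := by
  have hA := (A_pos ha s).ne'
  have hB := (B_pos ha s).ne'
  have hfstar : fstar a s = _ := ((hasDerivAt_A ha s).mul (hasDerivAt_φ ha s).cosh).deriv
  rw [hfstar]
  field_simp

theorem hasDerivAt_A_mul_fstar (ha : 1 / 2 < a) (s : ℝ) :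
    HasDerivAt (fun t ↦ A a t * fstar a t)
      (2 * A a s ^ 2 * Real.cosh (φ a s) -
        a * Real.sinh (2 * s) * (A a s * fstar a s) / (A a s ^ 2 * B a s ^ 2)) s := by
  have hA := (A_pos ha s).ne'
  have hB := (B_pos ha s).ne'
  have hsinh : HasDerivAt (fun t ↦ a * Real.sinh (2 * t)) (2 * B a s ^ 2 + 1) s := by
    refine (((hasDerivAt_id s).const_mul 2).sinh.const_mul a).congr_deriv ?_
    rw [B_sq ha, id, mul_one]
    ring
  have hφ := hasDerivAt_φ ha s
  have hsum := (hsinh.mul hφ.cosh).add ((hφ.sinh.const_mul (K a)).div (hasDerivAt_B ha s) hB)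
  refine (hsum.congr_of_eventuallyEq (.of_forall (A_mul_fstar ha))).congr_deriv ?_
  rw [A_mul_fstar ha]
  field_simp
  linear_combination B a s * Real.cosh (φ a s) * K_sq_add_sq ha s -
    (2 * A a s ^ 2 * B a s ^ 3 * Real.cosh (φ a s) +
      a * Real.sinh (2 * s) * K a * Real.sinh (φ a s)) * A_sq ha s

/-- As `B' / B = a * sinh (2 * s) / B ^ 2`, this is `x'' + (B' / B) x' = 2 x` for `x = A cosh φ`. -/
theorem hasDerivAt_fstar (ha : 1 / 2 < a) (s : ℝ) :
    HasDerivAt (fstar a)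
      (2 * (A a s * Real.cosh (φ a s)) - a * Real.sinh (2 * s) / B a s ^ 2 * fstar a s) s := by
  have hA := (A_pos ha s).ne'
  have hB := (B_pos ha s).ne'
  have hquot := (hasDerivAt_A_mul_fstar ha s).div (hasDerivAt_A ha s) hA
  refine (hquot.congr_of_eventuallyEq (.of_forall fun t ↦
    (mul_div_cancel_left₀ _ (A_pos ha t).ne').symm)).congr_deriv ?_
  field_simp
  linear_combination a * Real.sinh (2 * s) * fstar a s * A_sq ha s

end Profile

section FreeBoundary

variable {a s : ℝ}

/-- The free boundary condition `tanh φ = B K / (a sinh (2 s))` at `s`, under which the catenoid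
meets the geodesic sphere centred at `(1, 0, 0, 0)` orthogonally there. It is stated without
division because the quotient form would hold at `s = 0` through division by zero. -/
def IsFreeBoundary (a s : ℝ) : Prop :=
  a * Real.sinh (2 * s) * Real.sinh (φ a s) = B a s * K a * Real.cosh (φ a s)

theorem isFreeBoundary_iff_tanh_eq (ha : a ≠ 0) (hs : s ≠ 0) :
    IsFreeBoundary a s ↔ Real.tanh (φ a s) = B a s * K a / (a * Real.sinh (2 * s)) := by
  have hsinh : a * Real.sinh (2 * s) ≠ 0 :=
    mul_ne_zero ha (Real.sinh_ne_zero.2 (mul_ne_zero two_ne_zero hs))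
  rw [Real.tanh_eq_sinh_div_cosh, div_eq_div_iff (Real.cosh_pos _).ne' hsinh, IsFreeBoundary,
    mul_comm (Real.sinh (φ a s))]

namespace IsFreeBoundary

theorem mul_fstar (h : IsFreeBoundary a s) (ha : 1 / 2 < a) :
    a * Real.sinh (2 * s) * fstar a s = B a s ^ 2 * (A a s * Real.cosh (φ a s)) := by
  have hA := (A_pos ha s).ne'
  have hB := (B_pos ha s).ne'
  refine mul_left_cancel₀ hA ?_
  rw [mul_left_comm, A_mul_fstar ha]
  unfold IsFreeBoundary at h
  field_simp
  linear_combination K a * h + B a s * Real.cosh (φ a s) * K_sq_add_sq ha s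

theorem fstar_pos (h : IsFreeBoundary a s) (ha : 1 / 2 < a) (hs : 0 < s) : 0 < fstar a s := by
  have hsinh : 0 < a * Real.sinh (2 * s) :=
    mul_pos (by linarith) (Real.sinh_pos_iff.2 (by linarith))
  have hmul : 0 < a * Real.sinh (2 * s) * fstar a s := by
    rw [h.mul_fstar ha]
    exact mul_pos (pow_pos (B_pos ha s) 2) (mul_pos (A_pos ha s) (Real.cosh_pos _))
  exact pos_of_mul_pos_right hmul hsinh.le

theorem mul_sinh_ne_zero (h : IsFreeBoundary a s) (ha : 1 / 2 < a) :
    a * Real.sinh (2 * s) ≠ 0 := by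
  intro hzero
  rw [IsFreeBoundary, hzero, zero_mul] at h
  exact (mul_pos (mul_pos (B_pos ha s) (K_pos ha)) (Real.cosh_pos _)).ne h

theorem fstar_sq (h : IsFreeBoundary a s) (ha : 1 / 2 < a) :
    fstar a s ^ 2 = (A a s * Real.cosh (φ a s)) ^ 2 - 1 := by
  have hA := A_sq ha s
  have hK := K_sq_add_sq ha s
  have hsq : (a * Real.sinh (2 * s)) ^ 2 =
      (A a s * Real.cosh (φ a s)) ^ 2 * (B a s ^ 2 - K a ^ 2) := by
    have hsinh_sq : (a * Real.sinh (2 * s)) ^ 2 * (Real.cosh (φ a s) ^ 2 - 1) =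
        (B a s * K a * Real.cosh (φ a s)) ^ 2 := by
      rw [← Real.sinh_sq, ← mul_pow, h]
    linear_combination -hsinh_sq + Real.cosh (φ a s) ^ 2 * (hK + K a ^ 2 * hA)
  refine mul_left_cancel₀ (pow_ne_zero 2 (h.mul_sinh_ne_zero ha)) ?_
  calc
    (a * Real.sinh (2 * s)) ^ 2 * fstar a s ^ 2
      = (B a s ^ 2) ^ 2 * (A a s * Real.cosh (φ a s)) ^ 2 := by
        rw [← mul_pow, h.mul_fstar ha, mul_pow]
    _ = ((a * Real.sinh (2 * s)) ^ 2 - (B a s ^ 2 - K a ^ 2)) *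
        (A a s * Real.cosh (φ a s)) ^ 2 := by
        linear_combination (A a s * Real.cosh (φ a s)) ^ 2 * (-hK - B a s ^ 2 * hA)
    _ = (a * Real.sinh (2 * s)) ^ 2 * ((A a s * Real.cosh (φ a s)) ^ 2 - 1) := by
        linear_combination hsq

theorem deriv_fstar (h : IsFreeBoundary a s) (ha : 1 / 2 < a) :
    deriv (fstar a) s = A a s * Real.cosh (φ a s) := by
  rw [(hasDerivAt_fstar ha s).deriv, div_mul_eq_mul_div, h.mul_fstar ha,
    mul_div_cancel_left₀ _ (pow_ne_zero 2 (B_pos ha s).ne')]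
  ring

end IsFreeBoundary

end FreeBoundary

/-- Robin boundary condition for `f_*`: under the free boundary condition,
`f_*(s₀) = sinh r` and `f_*'(s₀) = coth(r)·f_*(s₀)`. -/
theorem fstar_robin_condition (a : ℝ) (ha : 1 / 2 < a) (s₀ : ℝ) (hs₀ : 0 < s₀)
    (hFBC : Real.tanh (φ a s₀) = B a s₀ * K a / (a * Real.sinh (2 * s₀)))
    (r : ℝ) (hr : r = arcosh (A a s₀ * Real.cosh (φ a s₀))) :
    fstar a s₀ = Real.sinh r ∧
    deriv (fstar a) s₀ = Real.cosh r / Real.sinh r * fstar a s₀ := by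
  have hbdry : IsFreeBoundary a s₀ :=
    (isFreeBoundary_iff_tanh_eq (by linarith) hs₀.ne').2 hFBC
  have hx : 1 ≤ A a s₀ * Real.cosh (φ a s₀) :=
    one_le_mul_of_one_le_of_one_le (one_le_A ha s₀) (Real.one_le_cosh _)
  have hcosh : Real.cosh r = A a s₀ * Real.cosh (φ a s₀) := hr ▸ Real.cosh_arcosh hx
  have hpos : 0 < fstar a s₀ := hbdry.fstar_pos ha hs₀
  have hsinh : Real.sinh r = fstar a s₀ :=
    calc
      Real.sinh r = √((A a s₀ * Real.cosh (φ a s₀)) ^ 2 - 1) := hr ▸ Real.sinh_arcosh hx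
      _ = fstar a s₀ := by rw [← hbdry.fstar_sq ha, Real.sqrt_sq hpos.le]
  refine ⟨hsinh.symm, ?_⟩
  rw [hbdry.deriv_fstar ha, hcosh, hsinh, div_mul_cancel₀ _ hpos.ne']

end MoriCatenoid
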